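/- arXiv:2505.09799 — 2 statements merged into one kernel-verified Lean document; each statement's English description precedes it below -/
import Mathlib

section
/- Suppose the weight matrix W of a network (V, W) is symmetric. Then a function Φ : A^V → ℝ is an exact potential function for the signed network coordination game on (V, W) with external field h if and only if there exists a constant C ∈ ℝ such that Φ(x) = (1/2) Σ_{i,j∈V} W_ij x_i x_j + Σ_{i∈V} h_i x_i + C for every strategy profile x ∈ A^V. -/
open Finset Function

noncomputable section

/-- The binary action set `A = {−1, +1}`, as a subtype of `ℝ`. -/
abbrev Act : Type := {r : ℝ // r = 1 ∨ r = -1}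

def onePt : Act := ⟨1, Or.inl rfl⟩

def negOnePt : Act := ⟨-1, Or.inr rfl⟩

def actMul (a b : Act) : Act :=
  ⟨(a : ℝ) * (b : ℝ), by rcases a.2 with h1 | h1 <;> rcases b.2 with h2 | h2 <;> norm_num [h1, h2]⟩

def actNeg (a : Act) : Act :=
  ⟨-(a : ℝ), by rcases a.2 with h1 | h1 <;> norm_num [h1]⟩

/-- Utility of player `i` in the SNC game on the network `(V, W)` with external field `h`. -/
def utility {V : Type*} [Fintype V] (W : V → V → ℝ) (h : V → ℝ) (i : V) (x : V → Act) : ℝ :=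
  h i * (x i : ℝ) + (x i : ℝ) * ∑ j, W i j * (x j : ℝ)

/-- Best response set of player `i` (depends only on `x_{−i}`). -/
def bestResponse {V : Type*} [Fintype V] [DecidableEq V] (W : V → V → ℝ) (h : V → ℝ)
    (i : V) (x : V → Act) : Set Act :=
  {a | ∀ b : Act, utility W h i (Function.update x i b) ≤ utility W h i (Function.update x i a)}

/-- Nash equilibrium of the SNC game. -/
def IsNash {V : Type*} [Fintype V] [DecidableEq V] (W : V → V → ℝ) (h : V → ℝ)
    (x : V → Act) : Prop :=
  ∀ i, x i ∈ bestResponse W h i x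

/-- One step of a best-response path. -/
def BRStep {V : Type*} [Fintype V] [DecidableEq V] (W : V → V → ℝ) (h : V → ℝ)
    (x y : V → Act) : Prop :=
  ∃ i, (∀ j, j ≠ i → y j = x j) ∧ y i ≠ x i ∧ y i ∈ bestResponse W h i x

def GloballyBRReachable {V : Type*} [Fintype V] [DecidableEq V] (W : V → V → ℝ) (h : V → ℝ)
    (X : Set (V → Act)) : Prop :=
  ∀ x : V → Act, ∃ y ∈ X, Relation.ReflTransGen (BRStep W h) x y

def BRInvariant {V : Type*} [Fintype V] [DecidableEq V] (W : V → V → ℝ) (h : V → ℝ)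
    (X : Set (V → Act)) : Prop :=
  ∀ x ∈ X, ∀ y, Relation.ReflTransGen (BRStep W h) x y → y ∈ X

def GloballyBRStable {V : Type*} [Fintype V] [DecidableEq V] (W : V → V → ℝ) (h : V → ℝ)
    (X : Set (V → Act)) : Prop :=
  GloballyBRReachable W h X ∧ BRInvariant W h X

/-- Structural balance of a signed weight matrix. -/
def StructurallyBalanced {V : Type*} (W : V → V → ℝ) : Prop :=
  ∃ P : Set V, (∀ i j, (i ∈ P ↔ j ∈ P) → 0 ≤ W i j) ∧ (∀ i j, ¬(i ∈ P ↔ j ∈ P) → W i j ≤ 0)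

/-- `(h^−, h^+)`-indecomposability of a network. -/
def Indecomposable {V : Type*} [Fintype V] [DecidableEq V] (W : V → V → ℝ)
    (hm hp : V → ℝ) : Prop :=
  ∀ P M : Finset V, P ∪ M = Finset.univ → Disjoint P M → P.Nonempty → M.Nonempty →
    (∃ i ∈ P, ∑ j ∈ P, |W i j| + hp i < ∑ j ∈ M, |W i j|) ∨
    (∃ i ∈ M, (∑ j ∈ M, |W i j|) - hm i < ∑ j ∈ P, |W i j|)

/-- `Φ` is an exact potential function for the SNC game. -/
def IsExactPotential {V : Type*} [Fintype V] (W : V → V → ℝ) (h : V → ℝ)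
    (Φ : (V → Act) → ℝ) : Prop :=
  ∀ (i : V) (x y : V → Act), (∀ j, j ≠ i → x j = y j) →
    utility W h i y - utility W h i x = Φ y - Φ x

/-!
Since `x_i ^ 2 = 1`, both the utility of player `i` and the function
`(1 / 2) ∑ W_ij x_i x_j + ∑ h_i x_i` have the form `x_i * L + R`, where `R` does not depend on
`x_i` and `L` is the field exerted on `i` by the external field and the other players; for the
latter function this uses the symmetry of `W`. Hence they respond in the same way to a change of
`x_i`. Two potentials respond identically to all unilateral changes, and any two profiles are linked
by such changes, so potentials are unique up to a constant.
-/

theorem eq_of_forall_update_eq {ι : Type*} [Finite ι] [DecidableEq ι] {α : ι → Sort*} {β : Sort*}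
    {f : (∀ i, α i) → β} (hf : ∀ x i a, f (update x i a) = f x) (x y : ∀ i, α i) :
    f x = f y := by
  have := Fintype.ofFinite ι
  have piecewise_eq (s : Finset ι) : f (s.piecewise x y) = f y := by
    induction s using Finset.induction_on with
    | empty => rw [piecewise_empty]
    | insert i s _ ih => rw [piecewise_insert, hf, ih]
  simpa only [piecewise_univ] using piecewise_eq univ

theorem sum_sum_eq_add_two_nsmul_add_of_symm {ι M : Type*} [Fintype ι] [DecidableEq ι]
    [AddCommMonoid M] {F : ι → ι → M} (hF : ∀ j k, F j k = F k j) (i : ι) :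
    ∑ j, ∑ k, F j k =
      F i i + 2 • ∑ j ∈ univ.erase i, F i j + ∑ j ∈ univ.erase i, ∑ k ∈ univ.erase i, F j k := by
  have split_row (j : ι) : ∑ k, F j k = F i j + ∑ k ∈ univ.erase i, F j k := by
    rw [← add_sum_erase univ (F j) (mem_univ i), hF j i]
  rw [← add_sum_erase univ _ (mem_univ i), split_row i, sum_congr rfl fun j _ => split_row j,
    sum_add_distrib, two_nsmul]
  simp only [add_assoc]

theorem coe_act_mul_self (a : Act) : (a : ℝ) * a = 1 :=
  mul_self_eq_one_iff.mpr a.2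

section Potential

variable {V : Type*} [Fintype V]

/-- The energy function `(1 / 2) ∑ W_ij x_i x_j + ∑ h_i x_i` of the network, the candidate for an
exact potential, normalized to have no additive constant. -/
def coordinationPotential (W : V → V → ℝ) (h : V → ℝ) (x : V → Act) : ℝ :=
  (1 / 2) * ∑ i, ∑ j, W i j * (x i : ℝ) * (x j : ℝ) + ∑ i, h i * (x i : ℝ)

theorem IsExactPotential.add_const {W : V → V → ℝ} {h : V → ℝ} {Φ : (V → Act) → ℝ}
    (hΦ : IsExactPotential W h Φ) (C : ℝ) : IsExactPotential W h fun x => Φ x + C :=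
  fun i x y hxy => by rw [hΦ i x y hxy, add_sub_add_right_eq_sub]

theorem IsExactPotential.sub_eq_sub {W : V → V → ℝ} {h : V → ℝ} {Φ Ψ : (V → Act) → ℝ}
    (hΦ : IsExactPotential W h Φ) (hΨ : IsExactPotential W h Ψ) (x y : V → Act) :
    Φ x - Ψ x = Φ y - Ψ y := by
  classical
  refine eq_of_forall_update_eq (f := fun x => Φ x - Ψ x) (fun x i a => ?_) x y
  have agree : ∀ j, j ≠ i → x j = update x i a j := fun j hj => (update_of_ne hj a x).symm
  have same_increment := (hΦ i x _ agree).symm.trans (hΨ i x _ agree)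
  exact sub_eq_sub_iff_sub_eq_sub.mp same_increment

theorem IsExactPotential.iff_exists_eq_add_const {W : V → V → ℝ} {h : V → ℝ}
    {Φ Ψ : (V → Act) → ℝ} (hΨ : IsExactPotential W h Ψ) :
    IsExactPotential W h Φ ↔ ∃ C, ∀ x, Φ x = Ψ x + C := by
  constructor
  · intro hΦ
    let x₀ : V → Act := fun _ => onePt
    exact ⟨Φ x₀ - Ψ x₀, fun x => eq_add_of_sub_eq' (hΦ.sub_eq_sub hΨ x x₀)⟩
  · rintro ⟨C, hC⟩
    exact funext hC ▸ hΨ.add_const C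

variable [DecidableEq V]

/-- The field that the external field and the other players exert on player `i`; the self-weight
`W i i` is left out, so that the field does not depend on the action of `i`. -/
def localField (W : V → V → ℝ) (h : V → ℝ) (i : V) (x : V → Act) : ℝ :=
  h i + ∑ j ∈ univ.erase i, W i j * (x j : ℝ)

theorem localField_congr (W : V → V → ℝ) (h : V → ℝ) {i : V} {x y : V → Act}
    (hxy : ∀ j, j ≠ i → x j = y j) : localField W h i x = localField W h i y :=
  congrArg (h i + ·) <| sum_congr rfl fun j hj => by rw [hxy j (ne_of_mem_erase hj)]

theorem utility_eq_mul_localField_add (W : V → V → ℝ) (h : V → ℝ) (i : V) (x : V → Act) :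
    utility W h i x = x i * localField W h i x + W i i := by
  rw [utility, localField, ← add_sum_erase univ _ (mem_univ i)]
  linear_combination W i i * coe_act_mul_self (x i)

theorem coordinationPotential_eq_mul_localField_add {W : V → V → ℝ} (h : V → ℝ)
    (hW : ∀ i j, W i j = W j i) (i : V) (x : V → Act) :
    coordinationPotential W h x = x i * localField W h i x + W i i / 2 +
      ((1 / 2) * ∑ j ∈ univ.erase i, ∑ k ∈ univ.erase i, W j k * (x j : ℝ) * (x k : ℝ) +
        ∑ j ∈ univ.erase i, h j * (x j : ℝ)) := by
  have weight_symm (j k : V) : W j k * (x j : ℝ) * x k = W k j * (x k : ℝ) * x j := by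
    rw [hW j k, mul_right_comm]
  have row_eq : ∑ j ∈ univ.erase i, W i j * (x i : ℝ) * x j =
      x i * ∑ j ∈ univ.erase i, W i j * (x j : ℝ) := by
    rw [mul_sum]
    exact sum_congr rfl fun j _ => by ring
  rw [coordinationPotential, localField, sum_sum_eq_add_two_nsmul_add_of_symm weight_symm i,
    row_eq, ← add_sum_erase univ (fun j => h j * (x j : ℝ)) (mem_univ i)]
  linear_combination W i i / 2 * coe_act_mul_self (x i)

theorem coordinationPotential_sub_eq {W : V → V → ℝ} (h : V → ℝ) (hW : ∀ i j, W i j = W j i)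
    {i : V} {x y : V → Act} (hxy : ∀ j, j ≠ i → x j = y j) :
    coordinationPotential W h y - coordinationPotential W h x =
      ((y i : ℝ) - x i) * localField W h i x := by
  have pair_eq : ∑ j ∈ univ.erase i, ∑ k ∈ univ.erase i, W j k * (x j : ℝ) * (x k : ℝ) =
      ∑ j ∈ univ.erase i, ∑ k ∈ univ.erase i, W j k * (y j : ℝ) * (y k : ℝ) :=
    sum_congr rfl fun j hj => sum_congr rfl fun k hk => by
      rw [hxy j (ne_of_mem_erase hj), hxy k (ne_of_mem_erase hk)]
  have field_eq : ∑ j ∈ univ.erase i, h j * (x j : ℝ) = ∑ j ∈ univ.erase i, h j * (y j : ℝ) :=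
    sum_congr rfl fun j hj => by rw [hxy j (ne_of_mem_erase hj)]
  rw [coordinationPotential_eq_mul_localField_add h hW i,
    coordinationPotential_eq_mul_localField_add h hW i, pair_eq, field_eq, localField_congr W h hxy]
  ring

theorem utility_sub_eq (W : V → V → ℝ) (h : V → ℝ) {i : V} {x y : V → Act}
    (hxy : ∀ j, j ≠ i → x j = y j) :
    utility W h i y - utility W h i x = ((y i : ℝ) - x i) * localField W h i x := by
  rw [utility_eq_mul_localField_add, utility_eq_mul_localField_add, localField_congr W h hxy]
  ring

end Potential

theorem isExactPotential_coordinationPotential {V : Type*} [Fintype V] {W : V → V → ℝ} (h : V → ℝ)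
    (hW : ∀ i j, W i j = W j i) : IsExactPotential W h (coordinationPotential W h) := by
  classical
  exact fun _ _ _ hxy => (utility_sub_eq W h hxy).trans (coordinationPotential_sub_eq h hW hxy).symm

theorem stmt1_general {V : Type*} [Fintype V] (W : V → V → ℝ) (h : V → ℝ)
    (hsymm : ∀ i j, W i j = W j i) (Φ : (V → Act) → ℝ) :
    IsExactPotential W h Φ ↔
      ∃ C : ℝ, ∀ x : V → Act,
        Φ x = (1 / 2) * ∑ i, ∑ j, W i j * (x i : ℝ) * (x j : ℝ)
              + ∑ i, h i * (x i : ℝ) + C :=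
  (isExactPotential_coordinationPotential h hsymm).iff_exists_eq_add_const

theorem stmt1 {V : Type*} [Fintype V] [DecidableEq V] [Nonempty V]
    (W : V → V → ℝ) (h : V → ℝ) (hdiag : ∀ i, W i i = 0)
    (hsymm : ∀ i j, W i j = W j i) (Φ : (V → Act) → ℝ) :
    IsExactPotential W h Φ ↔
      ∃ C : ℝ, ∀ x : V → Act,
        Φ x = (1 / 2) * ∑ i, ∑ j, W i j * (x i : ℝ) * (x j : ℝ)
              + ∑ i, h i * (x i : ℝ) + C :=
  stmt1_general W h hsymm Φ
end
end

section
/- The signed network coordination game on a network (V, W) with external field h is super-modular if and only if the weight matrix W is non-negative (i.e., W_ij ≥ 0 for all i, j ∈ V). -/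
open Finset Function

noncomputable section

/-- The SNC game is super-modular: increasing differences with respect to the
componentwise order on strategy profiles (with actions ordered as reals, `−1 < +1`). -/
def Supermodular {V : Type*} [Fintype V] [DecidableEq V] (W : V → V → ℝ) (h : V → ℝ) : Prop :=
  ∀ (i : V) (x y : V → Act), (∀ j, (x j : ℝ) ≤ (y j : ℝ)) →
    utility W h i (Function.update x i onePt) - utility W h i (Function.update x i negOnePt) ≤
    utility W h i (Function.update y i onePt) - utility W h i (Function.update y i negOnePt)

theorem monotone_sum_mul_iff {ι α R : Type*} [Preorder α] [Ring R] [LinearOrder R]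
    [IsStrictOrderedRing R] {f : α → R} (hf : Monotone f) {a b : α} (hab : a ≤ b)
    (hfab : f a < f b) (s : Finset ι) (c : ι → R) :
    Monotone (fun x : ι → α ↦ ∑ j ∈ s, c j * f (x j)) ↔ ∀ j ∈ s, 0 ≤ c j := by
  classical
  refine ⟨fun hmono j hj ↦ ?_, fun hc x y hxy ↦ ?_⟩
  · have hle : (fun _ ↦ a) ≤ update (fun _ ↦ a) j b := le_update_self_iff.2 hab
    have hgain : 0 ≤ c j * (f b - f a) :=
      calc
        0 ≤ ∑ k ∈ s, c k * f (update (fun _ ↦ a) j b k) - ∑ k ∈ s, c k * f a :=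
          sub_nonneg.2 (hmono hle)
        _ = ∑ k ∈ s, c k * (f (update (fun _ ↦ a) j b k) - f a) := by
          simp only [mul_sub, sum_sub_distrib]
        _ = c j * (f (update (fun _ ↦ a) j b j) - f a) :=
          sum_eq_single_of_mem j hj fun k _ hkj ↦ by rw [update_of_ne hkj, sub_self, mul_zero]
        _ = c j * (f b - f a) := by rw [update_self]
    exact nonneg_of_mul_nonneg_left hgain (sub_pos.2 hfab)
  · exact sum_le_sum fun j hj ↦ mul_le_mul_of_nonneg_left (hf (hxy j)) (hc j hj)

theorem negOnePt_lt_onePt : negOnePt < onePt :=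
  show (-1 : ℝ) < 1 by norm_num

section UtilityDifference

variable {V : Type*} [Fintype V] [DecidableEq V] (W : V → V → ℝ) (h : V → ℝ)

theorem utility_update (i : V) (x : V → Act) (a : Act) :
    utility W h i (update x i a) =
      W i i * (a : ℝ) ^ 2 + a * (h i + ∑ j ∈ univ.erase i, W i j * (x j : ℝ)) := by
  have hothers : ∑ j ∈ univ.erase i, W i j * (update x i a j : ℝ) =
      ∑ j ∈ univ.erase i, W i j * (x j : ℝ) :=
    sum_congr rfl fun j hj ↦ by rw [update_of_ne (ne_of_mem_erase hj)]
  rw [utility, ← add_sum_erase univ _ (mem_univ i), hothers, update_self]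
  ring

-- The self-weight contributes `W i i * (±1) ^ 2`, which cancels in the difference.
theorem utility_update_onePt_sub_utility_update_negOnePt (i : V) (x : V → Act) :
    utility W h i (update x i onePt) - utility W h i (update x i negOnePt) =
      2 * (h i + ∑ j ∈ univ.erase i, W i j * (x j : ℝ)) := by
  simp only [utility_update, onePt, negOnePt]
  ring

theorem supermodular_iff_forall_monotone :
    Supermodular W h ↔
      ∀ i, Monotone fun x : V → Act ↦ ∑ j ∈ univ.erase i, W i j * (x j : ℝ) := by
  simp only [Supermodular, utility_update_onePt_sub_utility_update_negOnePt,
    mul_le_mul_iff_right₀ (zero_lt_two' ℝ), add_le_add_iff_left]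
  rfl

theorem stmt3_general : Supermodular W h ↔ Pairwise fun i j ↦ 0 ≤ W i j := by
  simp only [supermodular_iff_forall_monotone,
    monotone_sum_mul_iff (Subtype.mono_coe _) negOnePt_lt_onePt.le negOnePt_lt_onePt, mem_erase,
    mem_univ, and_true, ne_comm, Pairwise]

end UtilityDifference

theorem stmt3 {V : Type*} [Fintype V] [DecidableEq V] [Nonempty V]
    (W : V → V → ℝ) (h : V → ℝ) (hdiag : ∀ i, W i i = 0) :
    Supermodular W h ↔ (∀ i j, 0 ≤ W i j) := by
  rw [stmt3_general]
  refine ⟨fun hW i j ↦ ?_, fun hW i j _ ↦ hW i j⟩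
  obtain rfl | hij := eq_or_ne i j
  exacts [(hdiag i).ge, hW hij]
end
end
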